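/- Let O be a commutative ring, n ≥ 1, and A, A' two O-algebras. Regard A≀Sₙ and A'≀Sₙ as Sₙ-graded algebras with σ-components A^{⊗n} ⊗ Oσ and A'^{⊗n} ⊗ Oσ respectively, and let Δ_{Sₙ}(A≀Sₙ ⊗ (A'≀Sₙ)^{op}) := ⊕_{σ∈Sₙ} (A≀Sₙ)_σ ⊗ ((A'≀Sₙ)^{op})_σ be the diagonal subalgebra of A≀Sₙ ⊗_O (A'≀Sₙ)^{op} with respect to the diagonal subgroup δ(Sₙ) = {(σ,σ⁻¹) : σ ∈ Sₙ}, where ((A'≀Sₙ)^{op})_σ = ((A'≀Sₙ)_{σ⁻¹})^{op}. Then there is an isomorphism of O-algebras Δ_{Sₙ}(A≀Sₙ ⊗ (A'≀Sₙ)^{op}) ≅ (A^{⊗n} ⊗ (A'^{⊗n})^{op}) ⊗ OSₙ, where the right-hand side is the wreath product (A ⊗ A'^{op}-type) algebra with multiplication twisted by the permutation action of Sₙ on the n-fold tensor factors. -/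

import Mathlib

open scoped TensorProduct
open PiTensorProduct MulOpposite

/-- The permutation action of `Sₙ` on `Gⁿ`. -/
def permMulAut (G : Type*) [Group G] (n : ℕ) :
    Equiv.Perm (Fin n) →* MulAut (Fin n → G) where
  toFun σ :=
    { toEquiv := Equiv.arrowCongr σ (Equiv.refl G)
      map_mul' := fun _ _ => rfl }
  map_one' := by ext g i; rfl
  map_mul' := fun σ τ => by ext g i; rfl

/-- `(e, s)` presents the `O`-algebra `W` as the wreath product `T ≀ Sₙ` of the
`O`-algebra `T` (carrying an `Sₙ`-action `Φ`): `e` is injective,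
`W = ⊕_σ e(T)·s(σ)` as an `O`-module, and `s(σ) e(t) = e(^σ t) s(σ)`. -/
def IsWreathPresentation (O : Type*) [CommRing O] {n : ℕ} {T W : Type*}
    [Ring T] [Algebra O T] [Ring W] [Algebra O W]
    (e : T →ₐ[O] W) (s : Equiv.Perm (Fin n) →* Wˣ)
    (Φ : Equiv.Perm (Fin n) →* (T ≃ₐ[O] T)) : Prop :=
  Function.Injective e ∧
  (letI := Classical.decEq (Equiv.Perm (Fin n));
    DirectSum.IsInternal fun σ : Equiv.Perm (Fin n) =>
      Submodule.map (LinearMap.mulRight O ((s σ : Wˣ) : W))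
        (Subalgebra.toSubmodule e.range)) ∧
  ∀ (σ : Equiv.Perm (Fin n)) (t : T),
    ((s σ : Wˣ) : W) * e t = e (Φ σ t) * ((s σ : Wˣ) : W)

/-- The `σ`-component `T ⊗ Oσ = e(T)·s(σ)` of the `Sₙ`-grading of `W = T ≀ Sₙ`. -/
def wreathSGrading (O : Type*) [CommRing O] {n : ℕ} {T W : Type*}
    [Ring T] [Algebra O T] [Ring W] [Algebra O W]
    (e : T →ₐ[O] W) (s : Equiv.Perm (Fin n) →* Wˣ)
    (σ : Equiv.Perm (Fin n)) : Submodule O W :=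
  Submodule.map (LinearMap.mulRight O ((s σ : Wˣ) : W)) (Subalgebra.toSubmodule e.range)

/-- The diagonal subalgebra `Δ_{Sₙ}(W ⊗ W'^{op}) = ⊕_σ W_σ ⊗ (W'^{op})_σ`, where
`(W'^{op})_σ = (W'_{σ⁻¹})^{op}`, as a submodule of `W ⊗[O] W'ᵐᵒᵖ`. -/
noncomputable def diagonalSub (O : Type*) [CommRing O] {n : ℕ} {T T' W W' : Type*}
    [Ring T] [Algebra O T] [Ring T'] [Algebra O T']
    [Ring W] [Algebra O W] [Ring W'] [Algebra O W']
    (e : T →ₐ[O] W) (s : Equiv.Perm (Fin n) →* Wˣ)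
    (e' : T' →ₐ[O] W') (s' : Equiv.Perm (Fin n) →* W'ˣ) :
    Submodule O (W ⊗[O] W'ᵐᵒᵖ) :=
  ⨆ σ : Equiv.Perm (Fin n),
    Submodule.span O (Set.image2 (· ⊗ₜ[O] ·)
      ((wreathSGrading O e s σ : Set W))
      ((Submodule.map (opLinearEquiv O).toLinearMap (wreathSGrading O e' s' σ⁻¹) :
        Submodule O W'ᵐᵒᵖ) : Set W'ᵐᵒᵖ))

/-!
A wreath product `T ≀ Sₙ` is a skew group algebra: it is `T`-free on the group elements, which
act on the coefficients when moved past them. Such presentations pass to opposite algebras, with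
`g` represented by `op (s g⁻¹)`. So it suffices to compare, for skew group algebras `W₁` over
`T₁` and `W₂` over `T₂`, the skew group algebra `V` over `T₁ ⊗ T₂` with the diagonal of
`W₁ ⊗ W₂`. The elements `s₁ g ⊗ s₂ g` satisfy the relations of `V`, which gives a homomorphism
`V → W₁ ⊗ W₂` by the universal property. In the coordinates
`(G →₀ T₁) ⊗ (G →₀ T₂) ≃ (G × G →₀ T₁ ⊗ T₂)` it is extension along the diagonal `G → G × G`,
hence injective, and its image in degree `g` is the tensor product of the two components of
degree `g`.
-/

theorem bijective_lsum_of_isInternal {ι R M N : Type*} [DecidableEq ι] [CommSemiring R]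
    [AddCommMonoid M] [Module R M] [AddCommMonoid N] [Module R N] {f : ι → M →ₗ[R] N}
    (hf : ∀ i, Function.Injective (f i))
    (h : DirectSum.IsInternal fun i => LinearMap.range (f i)) :
    Function.Bijective (Finsupp.lsum R f) := by
  classical
  let rangeEquiv (i : ι) : M ≃ₗ[R] LinearMap.range (f i) := LinearEquiv.ofInjective (f i) (hf i)
  let components : (ι →₀ M) ≃ₗ[R] DirectSum ι fun i => LinearMap.range (f i) :=
    finsuppLequivDFinsupp R ≪≫ₗ DFinsupp.mapRange.linearEquiv rangeEquiv
  have factor : Finsupp.lsum R f =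
      DirectSum.coeLinearMap (fun i => LinearMap.range (f i)) ∘ₗ components.toLinearMap := by
    refine Finsupp.lhom_ext fun i m => ?_
    have component : components (Finsupp.single i m) =
        DirectSum.lof R ι (fun i => LinearMap.range (f i)) i (rangeEquiv i m) :=
      (congrArg (DFinsupp.mapRange.linearEquiv rangeEquiv) (Finsupp.toDFinsupp_single i m)).trans
        (DFinsupp.mapRange_single (hf := fun i => map_zero (rangeEquiv i)))
    simp [component, rangeEquiv]
  rw [factor]
  exact (show Function.Bijective (DirectSum.coeLinearMap _) from h).comp components.bijective

theorem map_tmul_op_of_map_tprod {R ι κ : Type*} [CommSemiring R]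
    {M : ι → Type*} [∀ i, AddCommMonoid (M i)] [∀ i, Module R (M i)]
    {N : κ → Type*} [∀ k, AddCommMonoid (N k)] [∀ k, Module R (N k)]
    {P Q : Type*} [AddCommMonoid P] [Module R P] [AddCommMonoid Q] [Module R Q]
    (f : (⨂[R] i, M i) →ₗ[R] P) (g : (⨂[R] k, N k) →ₗ[R] Q)
    (F : ((⨂[R] i, M i) ⊗[R] (⨂[R] k, N k)ᵐᵒᵖ) →ₗ[R] (P ⊗[R] Qᵐᵒᵖ))
    (hF : ∀ a b, F (tprod R a ⊗ₜ op (tprod R b)) = f (tprod R a) ⊗ₜ op (g (tprod R b)))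
    (x : ⨂[R] i, M i) (y : ⨂[R] k, N k) : F (x ⊗ₜ op y) = f x ⊗ₜ op (g y) := by
  induction x using PiTensorProduct.induction_on with
  | add x₁ x₂ h₁ h₂ => simp only [map_add, TensorProduct.add_tmul, h₁, h₂]
  | smul_tprod r a =>
    induction y using PiTensorProduct.induction_on with
    | add y₁ y₂ h₁ h₂ => simp only [map_add, op_add, TensorProduct.tmul_add, h₁, h₂]
    | smul_tprod q b =>
      simp only [map_smul, op_smul, TensorProduct.tmul_smul, ← TensorProduct.smul_tmul', hF]

section SkewMonoidAlgebra

variable {O G T T₁ T₂ W W₁ W₂ X : Type*} [CommSemiring O] [Monoid G]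
  [Semiring T] [Algebra O T] [Semiring T₁] [Algebra O T₁] [Semiring T₂] [Algebra O T₂]
  [Semiring W] [Algebra O W] [Semiring W₁] [Algebra O W₁] [Semiring W₂] [Algebra O W₂]
  [Semiring X] [Algebra O X]

/-- The map `t ↦ e t * s g` parametrizing the `g`-component of a skew monoid algebra with
coefficients `e : T → W` and monoid elements `s : G → W`. -/
def skewTerm (e : T →ₐ[O] W) (s : G →* W) (g : G) : T →ₗ[O] W :=
  LinearMap.mulRight O (s g) ∘ₗ e.toLinearMap

@[simp]
theorem skewTerm_apply (e : T →ₐ[O] W) (s : G →* W) (g : G) (t : T) :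
    skewTerm e s g t = e t * s g :=
  rfl

/-- The homogeneous component of degree `g` of the skew monoid algebra presented by `(e, s)`. -/
def skewComponent (e : T →ₐ[O] W) (s : G →* W) (g : G) : Submodule O W :=
  LinearMap.range (skewTerm e s g)

/-- The map `∑ g, t_g · g ↦ ∑ g, e t_g * s g` out of the `O`-module underlying the skew monoid
algebra of `G` over `T`. -/
noncomputable def skewSum (e : T →ₐ[O] W) (s : G →* W) : (G →₀ T) →ₗ[O] W :=
  Finsupp.lsum O (skewTerm e s)

@[simp]
theorem skewSum_single (e : T →ₐ[O] W) (s : G →* W) (g : G) (t : T) :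
    skewSum e s (Finsupp.single g t) = e t * s g :=
  Finsupp.lsum_single ..

theorem range_skewSum (e : T →ₐ[O] W) (s : G →* W) :
    LinearMap.range (skewSum e s) = ⨆ g, skewComponent e s g := by
  apply le_antisymm
  · rintro _ ⟨f, rfl⟩
    induction f using Finsupp.induction_linear with
    | zero => simp
    | add f₁ f₂ h₁ h₂ => simpa only [map_add] using add_mem h₁ h₂
    | single g t => exact Submodule.mem_iSup_of_mem g ⟨t, (skewSum_single e s g t).symm⟩
  · refine iSup_le fun g => ?_
    rintro _ ⟨t, rfl⟩
    exact ⟨Finsupp.single g t, skewSum_single e s g t⟩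

/-- Covariant pairs, the pairs `(E, S)` satisfying the defining relation of the skew monoid algebra
for the action `Φ`. -/
def IsCovariantPair (E : T →ₐ[O] X) (S : G →* X) (Φ : G →* (T ≃ₐ[O] T)) : Prop :=
  ∀ g t, S g * E t = E (Φ g t) * S g

theorem IsCovariantPair.mul_mul_mul {E : T →ₐ[O] X} {S : G →* X} {Φ : G →* (T ≃ₐ[O] T)}
    (hS : IsCovariantPair E S Φ) (g k : G) (t u : T) :
    (E t * S g) * (E u * S k) = E (t * Φ g u) * S (g * k) :=
  calc (E t * S g) * (E u * S k) = E t * (S g * E u) * S k := by simp only [mul_assoc]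
    _ = E (t * Φ g u) * S (g * k) := by simp only [hS g u, map_mul, mul_assoc]

/-- `(e, s)` presents `W` as the skew monoid algebra of `G` over `T` for the action `Φ`: the pair
is covariant and every element of `W` is uniquely of the form `∑ g, e t_g * s g`. -/
structure IsSkewMonoidAlgebra (e : T →ₐ[O] W) (s : G →* W) (Φ : G →* (T ≃ₐ[O] T)) : Prop where
  bijective_skewSum : Function.Bijective (skewSum e s)
  isCovariantPair : IsCovariantPair e s Φ

namespace IsSkewMonoidAlgebra

variable {e : T →ₐ[O] W} {s : G →* W} {Φ : G →* (T ≃ₐ[O] T)}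

theorem induction_on (h : IsSkewMonoidAlgebra e s Φ) {p : W → Prop} (w : W)
    (zero : p 0) (add : ∀ x y, p x → p y → p (x + y)) (term : ∀ g t, p (e t * s g)) : p w := by
  obtain ⟨f, rfl⟩ := h.bijective_skewSum.surjective w
  induction f using Finsupp.induction_linear with
  | zero => simpa using zero
  | add f₁ f₂ h₁ h₂ => simpa only [map_add] using add _ _ h₁ h₂
  | single g t => simpa only [skewSum_single] using term g t

/-- The coordinates of the elements of a skew monoid algebra. -/
noncomputable def coordEquiv (h : IsSkewMonoidAlgebra e s Φ) : (G →₀ T) ≃ₗ[O] W :=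
  LinearEquiv.ofBijective (skewSum e s) h.bijective_skewSum

/-- The linear map underlying `IsSkewMonoidAlgebra.lift`. -/
noncomputable def liftLinear (h : IsSkewMonoidAlgebra e s Φ) (E : T →ₐ[O] X) (S : G →* X) :
    W →ₗ[O] X :=
  skewSum E S ∘ₗ h.coordEquiv.symm.toLinearMap

theorem liftLinear_term (h : IsSkewMonoidAlgebra e s Φ) (E : T →ₐ[O] X) (S : G →* X)
    (g : G) (t : T) : h.liftLinear E S (e t * s g) = E t * S g := by
  have coord : h.coordEquiv.symm (e t * s g) = Finsupp.single g t :=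
    h.coordEquiv.symm_apply_eq.2 (skewSum_single e s g t).symm
  simp [liftLinear, coord]

theorem liftLinear_mul (h : IsSkewMonoidAlgebra e s Φ) {E : T →ₐ[O] X} {S : G →* X}
    (hS : IsCovariantPair E S Φ) (x y : W) :
    h.liftLinear E S (x * y) = h.liftLinear E S x * h.liftLinear E S y := by
  induction x using h.induction_on with
  | zero => simp
  | add x₁ x₂ h₁ h₂ => simp only [add_mul, map_add, h₁, h₂]
  | term g t =>
    induction y using h.induction_on with
    | zero => simp
    | add y₁ y₂ h₁ h₂ => simp only [mul_add, map_add, h₁, h₂]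
    | term k u =>
      simp only [h.isCovariantPair.mul_mul_mul, liftLinear_term, hS.mul_mul_mul]

/-- The universal property of a skew monoid algebra. -/
noncomputable def lift (h : IsSkewMonoidAlgebra e s Φ) {E : T →ₐ[O] X} {S : G →* X}
    (hS : IsCovariantPair E S Φ) : W →ₐ[O] X :=
  AlgHom.ofLinearMap (h.liftLinear E S)
    (by simpa only [map_one, mul_one] using h.liftLinear_term E S 1 1)
    (h.liftLinear_mul hS)

section Lift

variable (h : IsSkewMonoidAlgebra e s Φ) {E : T →ₐ[O] X} {S : G →* X} (hS : IsCovariantPair E S Φ)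

theorem lift_term (g : G) (t : T) : h.lift hS (e t * s g) = E t * S g :=
  h.liftLinear_term E S g t

theorem lift_map (t : T) : h.lift hS (e t) = E t := by
  simpa only [map_one, mul_one] using h.lift_term hS 1 t

theorem lift_of (g : G) : h.lift hS (s g) = S g := by
  simpa only [map_one, one_mul] using h.lift_term hS g 1

theorem lift_injective (hinj : Function.Injective (skewSum E S)) :
    Function.Injective (h.lift hS) :=
  hinj.comp h.coordEquiv.symm.injective

theorem range_lift :
    LinearMap.range (h.lift hS).toLinearMap = ⨆ g, skewComponent E S g :=
  (h.coordEquiv.symm.range_comp (skewSum E S)).trans (range_skewSum E S)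

end Lift

end IsSkewMonoidAlgebra

section Diagonal

/-- The diagonal part `⊕ᵢ Pᵢ ⊗ Qᵢ` of the tensor product of two graded modules, encoded as the
supremum of the images of the `Pᵢ ⊗ Qᵢ`. -/
def diagonalSubmodule {ι : Type*} (P : ι → Submodule O W₁) (Q : ι → Submodule O W₂) :
    Submodule O (W₁ ⊗[O] W₂) :=
  ⨆ i, Submodule.map₂ (TensorProduct.mk O W₁ W₂) (P i) (Q i)

/-- The homomorphism `g ↦ s₁ g ⊗ s₂ g`. -/
def diagonalHom (s₁ : G →* W₁) (s₂ : G →* W₂) : G →* W₁ ⊗[O] W₂ where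
  toFun g := s₁ g ⊗ₜ s₂ g
  map_one' := by simp only [map_one, Algebra.TensorProduct.one_def]
  map_mul' g k := by simp only [map_mul, Algebra.TensorProduct.tmul_mul_tmul]

@[simp]
theorem diagonalHom_apply (s₁ : G →* W₁) (s₂ : G →* W₂) (g : G) :
    diagonalHom (O := O) s₁ s₂ g = s₁ g ⊗ₜ s₂ g :=
  rfl

theorem IsCovariantPair.map_diagonalHom {e₁ : T₁ →ₐ[O] W₁} {s₁ : G →* W₁} {e₂ : T₂ →ₐ[O] W₂}
    {s₂ : G →* W₂} {Φ₁ : G →* (T₁ ≃ₐ[O] T₁)} {Φ₂ : G →* (T₂ ≃ₐ[O] T₂)}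
    {Φ : G →* ((T₁ ⊗[O] T₂) ≃ₐ[O] (T₁ ⊗[O] T₂))}
    (hΦ : ∀ g x y, Φ g (x ⊗ₜ y) = Φ₁ g x ⊗ₜ Φ₂ g y)
    (h₁ : IsCovariantPair e₁ s₁ Φ₁) (h₂ : IsCovariantPair e₂ s₂ Φ₂) :
    IsCovariantPair (Algebra.TensorProduct.map e₁ e₂) (diagonalHom s₁ s₂) Φ := by
  intro g t
  induction t using TensorProduct.induction_on with
  | zero => simp
  | add t u ht hu => simp only [map_add, mul_add, add_mul, ht, hu]
  | tmul x y => simp [hΦ, h₁ g x, h₂ g y]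

variable (e₁ : T₁ →ₐ[O] W₁) (s₁ : G →* W₁) (e₂ : T₂ →ₐ[O] W₂) (s₂ : G →* W₂)

theorem skewTerm_map_diagonalHom (g : G) :
    skewTerm (Algebra.TensorProduct.map e₁ e₂) (diagonalHom s₁ s₂) g =
      TensorProduct.map (skewTerm e₁ s₁ g) (skewTerm e₂ s₂ g) :=
  TensorProduct.ext' fun _ _ => Algebra.TensorProduct.tmul_mul_tmul ..

theorem iSup_skewComponent_map_diagonalHom :
    ⨆ g, skewComponent (Algebra.TensorProduct.map e₁ e₂) (diagonalHom s₁ s₂) g =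
      diagonalSubmodule (skewComponent e₁ s₁) (skewComponent e₂ s₂) := by
  simp only [skewComponent, skewTerm_map_diagonalHom, TensorProduct.range_map, diagonalSubmodule]

theorem skewSum_map_diagonalHom :
    skewSum (Algebra.TensorProduct.map e₁ e₂) (diagonalHom s₁ s₂) =
      TensorProduct.map (skewSum e₁ s₁) (skewSum e₂ s₂) ∘ₗ
        (finsuppTensorFinsupp O O T₁ T₂ G G).symm.toLinearMap ∘ₗ
          Finsupp.lmapDomain (T₁ ⊗[O] T₂) O fun g => (g, g) := by
  refine Finsupp.lhom_ext' fun g => TensorProduct.ext' fun x y => ?_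
  simp

namespace IsSkewMonoidAlgebra

variable {e₁ s₁ e₂ s₂} {Φ₁ : G →* (T₁ ≃ₐ[O] T₁)} {Φ₂ : G →* (T₂ ≃ₐ[O] T₂)}

theorem skewSum_map_diagonalHom_injective (h₁ : IsSkewMonoidAlgebra e₁ s₁ Φ₁)
    (h₂ : IsSkewMonoidAlgebra e₂ s₂ Φ₂) :
    Function.Injective (skewSum (Algebra.TensorProduct.map e₁ e₂) (diagonalHom s₁ s₂)) := by
  have diag : Function.Injective fun g : G => (g, g) := fun _ _ h => congrArg Prod.fst h
  rw [skewSum_map_diagonalHom]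
  exact (TensorProduct.congr h₁.coordEquiv h₂.coordEquiv).injective.comp
    ((finsuppTensorFinsupp O O T₁ T₂ G G).symm.injective.comp (Finsupp.mapDomain_injective diag))

end IsSkewMonoidAlgebra

end Diagonal

end SkewMonoidAlgebra

section Opposite

variable {O G T W : Type*} [CommSemiring O] [Group G] [Semiring T] [Algebra O T]
  [Semiring W] [Algebra O W]

/-- The homomorphism `g ↦ op (s g⁻¹)` into the opposite algebra. -/
def opInvHom (s : G →* W) : G →* Wᵐᵒᵖ :=
  (MonoidHom.op s).comp (MulEquiv.inv' G).toMonoidHom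

/-- The action on the opposite algebra induced by an action `Φ` on `T`. -/
def opAction (Φ : G →* (T ≃ₐ[O] T)) : G →* (Tᵐᵒᵖ ≃ₐ[O] Tᵐᵒᵖ) where
  toFun g := AlgEquiv.op (Φ g)
  map_one' := by rw [map_one]; rfl
  map_mul' g k := by rw [map_mul]; rfl

/-- The reindexing `∑ g, op t_g · g ↦ ∑ g, Φ g⁻¹ t_g · g⁻¹`, which moves the group elements of the
opposite of a skew group algebra back to the right of the coefficients. -/
noncomputable def opTwist (Φ : G →* (T ≃ₐ[O] T)) : (G →₀ Tᵐᵒᵖ) ≃ₗ[O] (G →₀ T) :=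
  LinearEquiv.ofLinearMap
    (Finsupp.lsum O fun g =>
      Finsupp.lsingle g⁻¹ ∘ₗ (Φ g⁻¹).toLinearMap ∘ₗ (opLinearEquiv O).symm.toLinearMap)
    (Finsupp.lsum O fun g =>
      Finsupp.lsingle g⁻¹ ∘ₗ (opLinearEquiv O).toLinearMap ∘ₗ (Φ g⁻¹).toLinearMap)
    (Finsupp.lhom_ext fun g t => by simp)
    (Finsupp.lhom_ext fun g t => by simp)

theorem opTwist_single (Φ : G →* (T ≃ₐ[O] T)) (g : G) (t : Tᵐᵒᵖ) :
    opTwist Φ (Finsupp.single g t) = Finsupp.single g⁻¹ (Φ g⁻¹ t.unop) := by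
  simp [opTwist]

variable {e : T →ₐ[O] W} {s : G →* W} {Φ : G →* (T ≃ₐ[O] T)}

namespace IsCovariantPair

theorem op (h : IsCovariantPair e s Φ) :
    IsCovariantPair (AlgHom.op e) (opInvHom s) (opAction Φ) := by
  intro g t
  have swap : s g⁻¹ * e (Φ g t.unop) = e t.unop * s g⁻¹ := by simp [h g⁻¹]
  exact (congrArg MulOpposite.op swap).symm

theorem skewTerm_op_opInvHom (h : IsCovariantPair e s Φ) (g : G) :
    skewTerm (AlgHom.op e) (opInvHom s) g =
      (opLinearEquiv O).toLinearMap ∘ₗ skewTerm e s g⁻¹ ∘ₗ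
        ((opLinearEquiv O).symm ≪≫ₗ (Φ g⁻¹).toLinearEquiv).toLinearMap :=
  LinearMap.ext fun t => congrArg MulOpposite.op (h g⁻¹ t.unop)

theorem skewComponent_op_opInvHom (h : IsCovariantPair e s Φ) (g : G) :
    skewComponent (AlgHom.op e) (opInvHom s) g =
      (skewComponent e s g⁻¹).map (opLinearEquiv O).toLinearMap := by
  rw [skewComponent, skewComponent, h.skewTerm_op_opInvHom, LinearMap.range_comp,
    LinearEquiv.range_comp]

theorem skewSum_op_opInvHom (h : IsCovariantPair e s Φ) :
    skewSum (AlgHom.op e) (opInvHom s) =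
      (opLinearEquiv O).toLinearMap ∘ₗ skewSum e s ∘ₗ (opTwist Φ).toLinearMap := by
  refine Finsupp.lhom_ext fun g t => ?_
  have term : skewTerm (AlgHom.op e) (opInvHom s) g t =
      MulOpposite.op (skewTerm e s g⁻¹ (Φ g⁻¹ t.unop)) :=
    LinearMap.congr_fun (h.skewTerm_op_opInvHom g) t
  simpa [opTwist_single] using term

end IsCovariantPair

theorem IsSkewMonoidAlgebra.op (h : IsSkewMonoidAlgebra e s Φ) :
    IsSkewMonoidAlgebra (AlgHom.op e) (opInvHom s) (opAction Φ) where
  bijective_skewSum := by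
    rw [h.isCovariantPair.skewSum_op_opInvHom]
    exact (opLinearEquiv O).bijective.comp (h.bijective_skewSum.comp (opTwist Φ).bijective)
  isCovariantPair := h.isCovariantPair.op

end Opposite

section WreathProduct

variable {O T W T' W' : Type*} [CommRing O] [Ring T] [Algebra O T] [Ring W] [Algebra O W]
  [Ring T'] [Algebra O T'] [Ring W'] [Algebra O W'] {n : ℕ}

theorem wreathSGrading_eq_skewComponent (e : T →ₐ[O] W) (s : Equiv.Perm (Fin n) →* Wˣ)
    (σ : Equiv.Perm (Fin n)) :
    wreathSGrading O e s σ = skewComponent e ((Units.coeHom W).comp s) σ :=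
  (LinearMap.range_comp e.toLinearMap (LinearMap.mulRight O (s σ : W))).symm

theorem diagonalSub_eq_diagonalSubmodule (e : T →ₐ[O] W) (s : Equiv.Perm (Fin n) →* Wˣ)
    (e' : T' →ₐ[O] W') (s' : Equiv.Perm (Fin n) →* W'ˣ) :
    diagonalSub O e s e' s' =
      diagonalSubmodule (skewComponent e ((Units.coeHom W).comp s))
        (fun σ => (skewComponent e' ((Units.coeHom W').comp s') σ⁻¹).map
          (opLinearEquiv O).toLinearMap) := by
  simp only [diagonalSub, diagonalSubmodule, Submodule.map₂_eq_span_image2,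
    wreathSGrading_eq_skewComponent, TensorProduct.mk_apply]

theorem IsWreathPresentation.isSkewMonoidAlgebra {e : T →ₐ[O] W} {s : Equiv.Perm (Fin n) →* Wˣ}
    {Φ : Equiv.Perm (Fin n) →* (T ≃ₐ[O] T)} (h : IsWreathPresentation O e s Φ) :
    IsSkewMonoidAlgebra e ((Units.coeHom W).comp s) Φ where
  bijective_skewSum := by
    let := Classical.decEq (Equiv.Perm (Fin n))
    have internal : DirectSum.IsInternal (wreathSGrading O e s) := h.2.1
    rw [funext (wreathSGrading_eq_skewComponent e s)] at internal
    exact bijective_lsum_of_isInternal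
      (fun σ => (s σ).isUnit.mul_left_injective.comp h.1) internal
  isCovariantPair := h.2.2

end WreathProduct

theorem stmt11_general {O G T T' W W' V : Type*} [CommSemiring O] [Group G]
    [Semiring T] [Algebra O T] [Semiring T'] [Algebra O T']
    [Semiring W] [Algebra O W] [Semiring W'] [Algebra O W'] [Semiring V] [Algebra O V]
    {Φ : G →* (T ≃ₐ[O] T)} {Φ' : G →* (T' ≃ₐ[O] T')}
    {ΦV : G →* ((T ⊗[O] T'ᵐᵒᵖ) ≃ₐ[O] (T ⊗[O] T'ᵐᵒᵖ))}
    (hΦV : ∀ g x y, ΦV g (x ⊗ₜ op y) = Φ g x ⊗ₜ op (Φ' g y))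
    {e : T →ₐ[O] W} {s : G →* W} (hW : IsSkewMonoidAlgebra e s Φ)
    {e' : T' →ₐ[O] W'} {s' : G →* W'} (hW' : IsSkewMonoidAlgebra e' s' Φ')
    {eV : (T ⊗[O] T'ᵐᵒᵖ) →ₐ[O] V} {sV : G →* V} (hV : IsSkewMonoidAlgebra eV sV ΦV) :
    ∃ F : V →ₐ[O] (W ⊗[O] W'ᵐᵒᵖ),
      Function.Injective F ∧
      LinearMap.range F.toLinearMap =
        diagonalSubmodule (skewComponent e s)
          (fun g => (skewComponent e' s' g⁻¹).map (opLinearEquiv O).toLinearMap) ∧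
      (∀ x y, F (eV (x ⊗ₜ op y)) = e x ⊗ₜ op (e' y)) ∧
      ∀ g, F (sV g) = s g ⊗ₜ op (s' g⁻¹) := by
  have covariant := IsCovariantPair.map_diagonalHom (Φ₂ := opAction Φ')
    (fun g x y => hΦV g x y.unop) hW.isCovariantPair hW'.isCovariantPair.op
  refine ⟨hV.lift covariant, hV.lift_injective covariant ?_, ?_,
    fun _ _ => hV.lift_map covariant _, hV.lift_of covariant⟩
  · exact hW.skewSum_map_diagonalHom_injective hW'.op
  · rw [hV.range_lift, iSup_skewComponent_map_diagonalHom,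
      funext hW'.isCovariantPair.skewComponent_op_opInvHom]

theorem stmt11 (O : Type*) [CommRing O] (n : ℕ) (hn : 1 ≤ n)
    (A A' : Type*) [Ring A] [Algebra O A] [Ring A'] [Algebra O A']
    -- the permutation actions of `Sₙ` on `A^{⊗n}`, `A'^{⊗n}`
    (Φ : Equiv.Perm (Fin n) →* ((⨂[O] _i : Fin n, A) ≃ₐ[O] (⨂[O] _i : Fin n, A)))
    (hΦ : ∀ (σ : Equiv.Perm (Fin n)) (a : Fin n → A),
      Φ σ (tprod O a) = tprod O (fun i => a (σ.symm i)))
    (Φ' : Equiv.Perm (Fin n) →* ((⨂[O] _i : Fin n, A') ≃ₐ[O] (⨂[O] _i : Fin n, A')))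
    (hΦ' : ∀ (σ : Equiv.Perm (Fin n)) (a' : Fin n → A'),
      Φ' σ (tprod O a') = tprod O (fun i => a' (σ.symm i)))
    -- and the simultaneous permutation action of `Sₙ` on `A^{⊗n} ⊗ (A'^{⊗n})^{op}`
    (ΦV : Equiv.Perm (Fin n) →*
      (((⨂[O] _i : Fin n, A) ⊗[O] (⨂[O] _i : Fin n, A')ᵐᵒᵖ) ≃ₐ[O]
        ((⨂[O] _i : Fin n, A) ⊗[O] (⨂[O] _i : Fin n, A')ᵐᵒᵖ)))
    (hΦV : ∀ (σ : Equiv.Perm (Fin n)) (a : Fin n → A) (a' : Fin n → A'),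
      ΦV σ (tprod O a ⊗ₜ[O] op (tprod O a')) =
        tprod O (fun i => a (σ.symm i)) ⊗ₜ[O] op (tprod O (fun i => a' (σ.symm i))))
    -- the wreath product algebras `W = A ≀ Sₙ`, `W' = A' ≀ Sₙ` and
    -- `V = (A^{⊗n} ⊗ (A'^{⊗n})^{op}) ⊗ OSₙ` (with multiplication twisted by `Sₙ`)
    (W : Type*) [Ring W] [Algebra O W]
    (e : (⨂[O] _i : Fin n, A) →ₐ[O] W) (s : Equiv.Perm (Fin n) →* Wˣ)
    (hW : IsWreathPresentation O e s Φ)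
    (W' : Type*) [Ring W'] [Algebra O W']
    (e' : (⨂[O] _i : Fin n, A') →ₐ[O] W') (s' : Equiv.Perm (Fin n) →* W'ˣ)
    (hW' : IsWreathPresentation O e' s' Φ')
    (V : Type*) [Ring V] [Algebra O V]
    (eV : ((⨂[O] _i : Fin n, A) ⊗[O] (⨂[O] _i : Fin n, A')ᵐᵒᵖ) →ₐ[O] V)
    (sV : Equiv.Perm (Fin n) →* Vˣ)
    (hV : IsWreathPresentation O eV sV ΦV) :
    -- there is an isomorphism of `O`-algebras
    -- `(A^{⊗n} ⊗ (A'^{⊗n})^{op}) ⊗ OSₙ ≅ Δ_{Sₙ}(A≀Sₙ ⊗ (A'≀Sₙ)^{op})`,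
    -- `x ⊗ op y ⊗ e ↦ (x ⊗ e) ⊗ op (y ⊗ e)`, `1 ⊗ σ ↦ (1 ⊗ σ) ⊗ op (1 ⊗ σ⁻¹)`
    ∃ F : V →ₐ[O] (W ⊗[O] W'ᵐᵒᵖ),
      Function.Injective F ∧
      LinearMap.range F.toLinearMap = diagonalSub O e s e' s' ∧
      (∀ (x : ⨂[O] _i : Fin n, A) (y : ⨂[O] _i : Fin n, A'),
        F (eV (x ⊗ₜ[O] op y)) = e x ⊗ₜ[O] op (e' y)) ∧
      (∀ σ : Equiv.Perm (Fin n),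
        F ((sV σ : Vˣ) : V) = ((s σ : Wˣ) : W) ⊗ₜ[O] op ((s' σ⁻¹ : W'ˣ) : W')) := by
  rw [diagonalSub_eq_diagonalSubmodule]
  exact stmt11_general
    (fun σ => map_tmul_op_of_map_tprod (Φ σ).toLinearMap (Φ' σ).toLinearMap (ΦV σ).toLinearMap
      fun a a' => by simp [hΦ, hΦ', hΦV])
    hW.isSkewMonoidAlgebra hW'.isSkewMonoidAlgebra hV.isSkewMonoidAlgebra
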